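/- arXiv:1901.09578 — 2 statements merged into one kernel-verified Lean document; each statement's English description precedes it below -/
import Mathlib

section
/- (Sandwich formula for the lower model.) Let A ⊆ B ⊆ ∂Δ_n be simplicial complexes. For S ⊆ E(B) let A_S be the set of simplices τ ∈ ∂Δ_n with τ ∉ A such that τ ⊆ σ for some σ ∈ S, let P_S = ∏_{τ∈A_S} p_τ (with P_∅ = 1) and P̃ = ∏_{τ∈A} p_τ. Then the lower-model probability that A ⊆ Y ⊆ B, namely Σ_{Y complex, A⊆Y⊆B} P̲_n(Y), equals P̃ · Σ_{S⊆E(B)} (−1)^{|S|} P_S. -/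
open Finset

/-- The full simplex `Δₙ`: all nonempty subsets of `[n] = {0,…,n}`. -/
def simplexAll (n : ℕ) : Finset (Finset (Fin (n+1))) :=
  Finset.univ.filter fun σ => σ.Nonempty

/-- The boundary `∂Δₙ`: all nonempty proper subsets of `[n]`. -/
def bdry (n : ℕ) : Finset (Finset (Fin (n+1))) :=
  Finset.univ.filter fun σ => σ.Nonempty ∧ σ ≠ Finset.univ

/-- A hypergraph is a simplicial complex if it is closed under passing to
nonempty subsets. -/
def IsComplex {n : ℕ} (X : Finset (Finset (Fin (n+1)))) : Prop :=
  ∀ σ ∈ X, ∀ τ : Finset (Fin (n+1)), τ ⊆ σ → τ.Nonempty → τ ∈ X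

instance {n : ℕ} (X : Finset (Finset (Fin (n+1)))) : Decidable (IsComplex X) :=
  inferInstanceAs (Decidable (∀ σ ∈ X, ∀ τ : Finset (Fin (n+1)), τ ⊆ σ → τ.Nonempty → τ ∈ X))

/-- The dual hypergraph `c(X) = {σ̂ : σ ∈ ∂Δₙ, σ ∉ X}`, where `σ̂ = [n] \ σ`. -/
def dual {n : ℕ} (X : Finset (Finset (Fin (n+1)))) : Finset (Finset (Fin (n+1))) :=
  (bdry n \ X).image fun σ => σᶜ

/-- `X̄`: the smallest simplicial complex containing the hypergraph `X`. -/
def clUp {n : ℕ} (X : Finset (Finset (Fin (n+1)))) : Finset (Finset (Fin (n+1))) :=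
  Finset.univ.filter fun τ => τ.Nonempty ∧ ∃ σ ∈ X, τ ⊆ σ

/-- `X̲`: the largest simplicial complex contained in the hypergraph `X`. -/
def clLow {n : ℕ} (X : Finset (Finset (Fin (n+1)))) : Finset (Finset (Fin (n+1))) :=
  Finset.univ.filter fun τ => τ.Nonempty ∧ ∀ σ : Finset (Fin (n+1)), σ ⊆ τ → σ.Nonempty → σ ∈ X

/-- The Bernoulli measure with parameters `p` on hypergraphs contained in the
ambient set `S` of simplices: `P(X) = ∏_{σ∈X} p σ · ∏_{σ∈S\X} (1 - p σ)`. -/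
def bern {n : ℕ} (S : Finset (Finset (Fin (n+1)))) (p : Finset (Fin (n+1)) → ℝ)
    (X : Finset (Finset (Fin (n+1)))) : ℝ :=
  (∏ σ ∈ X, p σ) * ∏ σ ∈ S \ X, (1 - p σ)

/-- The upper measure: `P̄(Y) = Σ_{X ⊆ S, X̄ = Y} P(X)`. -/
def upperP {n : ℕ} (S : Finset (Finset (Fin (n+1)))) (p : Finset (Fin (n+1)) → ℝ)
    (Y : Finset (Finset (Fin (n+1)))) : ℝ :=
  ∑ X ∈ S.powerset.filter (fun X => clUp X = Y), bern S p X

/-- The lower measure: `P̲(Y) = Σ_{X ⊆ S, X̲ = Y} P(X)`. -/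
def lowerP {n : ℕ} (S : Finset (Finset (Fin (n+1)))) (p : Finset (Fin (n+1)) → ℝ)
    (Y : Finset (Finset (Fin (n+1)))) : ℝ :=
  ∑ X ∈ S.powerset.filter (fun X => clLow X = Y), bern S p X

/-- External simplices of `Y` relative to the ambient set `S`: simplices
`σ ∈ S` with `σ ∉ Y` but every nonempty proper subset of `σ` in `Y`. -/
def extSimp {n : ℕ} (S Y : Finset (Finset (Fin (n+1)))) : Finset (Finset (Fin (n+1))) :=
  S.filter fun σ => σ ∉ Y ∧ ∀ τ : Finset (Fin (n+1)), τ ⊂ σ → τ.Nonempty → τ ∈ Y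

/-- Maximal simplices of `Y`: simplices of `Y` not properly contained in another
simplex of `Y`. -/
def maxSimp {n : ℕ} (Y : Finset (Finset (Fin (n+1)))) : Finset (Finset (Fin (n+1))) :=
  Y.filter fun σ => ∀ τ ∈ Y, σ ⊆ τ → σ = τ

theorem bern_sum_superset {n : ℕ} (U T : Finset (Finset (Fin (n+1)))) (hT : T ⊆ U)
    (p : Finset (Fin (n+1)) → ℝ) :
    ∑ X ∈ U.powerset, (if T ⊆ X then bern U p X else 0) = ∏ τ ∈ T, p τ := by
  have h := Finset.prod_add p (fun i => if i ∈ T then 0 else 1 - p i) U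
  have h1 : ∏ i ∈ U, (p i + if i ∈ T then 0 else 1 - p i) = ∏ τ ∈ T, p τ := by
    rw [← Finset.prod_subset hT (f := fun i => p i + if i ∈ T then 0 else 1 - p i)]
    · exact Finset.prod_congr rfl fun i hi => by simp [hi]
    · intro i _ hi
      simp [hi]
  rw [← h1, h]
  refine Finset.sum_congr rfl fun X hX => ?_
  split_ifs with hTX
  · unfold bern
    congr 1
    refine Finset.prod_congr rfl fun i hi => ?_
    have : i ∉ T := fun h => (Finset.mem_sdiff.1 hi).2 (hTX h)
    simp [this]
  · obtain ⟨i, hiT, hiX⟩ := Finset.not_subset.1 hTX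
    symm
    apply mul_eq_zero_of_right
    exact Finset.prod_eq_zero (Finset.mem_sdiff.2 ⟨hT hiT, hiX⟩) (by simp [hiT])

theorem mem_clLow {n : ℕ} (X : Finset (Finset (Fin (n+1)))) (τ : Finset (Fin (n+1))) :
    τ ∈ clLow X ↔ τ.Nonempty ∧
      ∀ σ : Finset (Fin (n+1)), σ ⊆ τ → σ.Nonempty → σ ∈ X := by
  simp [clLow]

theorem clLow_subset {n : ℕ} (X : Finset (Finset (Fin (n+1)))) : clLow X ⊆ X := by
  intro τ h
  rw [mem_clLow] at h
  exact h.2 τ subset_rfl h.1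

theorem isComplex_clLow {n : ℕ} (X : Finset (Finset (Fin (n+1)))) : IsComplex (clLow X) := by
  intro σ hσ τ h1 h2
  rw [mem_clLow] at hσ ⊢
  exact ⟨h2, fun ρ h3 h4 => hσ.2 ρ (h3.trans h1) h4⟩

theorem clLow_subset_iff {n : ℕ} (U X B : Finset (Finset (Fin (n+1)))) (hX : X ⊆ U)
    : clLow X ⊆ B ↔ ∀ σ ∈ extSimp U B, σ ∉ clLow X := by
  constructor
  · intro h σ hσ h2
    exact (Finset.mem_filter.1 hσ).2.1 (h h2)
  · intro h τ
    induction τ using Finset.strongInduction with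
    | H τ ih =>
      intro hτ
      by_contra hB
      refine h τ (Finset.mem_filter.2 ⟨hX (clLow_subset X hτ), hB, fun ρ h1 h2 => ?_⟩) hτ
      exact ih ρ h1 (isComplex_clLow X τ hτ ρ h1.subset h2)

theorem mem_bdry_iff {n : ℕ} (σ : Finset (Fin (n+1))) :
    σ ∈ bdry n ↔ σ.Nonempty ∧ σ ≠ Finset.univ := by
  simp [bdry]

/-- Sandwich formula for the lower model: for simplicial complexes
`A ⊆ B ⊆ ∂Δₙ`, the lower-model probability that `A ⊆ Y ⊆ B` equals
`P̃ · Σ_{S ⊆ E(B)} (-1)^{|S|} P_S`, where `P̃ = ∏_{τ∈A} p_τ` and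
`P_S = ∏_{τ∈A_S} p_τ` with `A_S = {τ ∉ A : τ ⊆ σ for some σ ∈ S}`. -/
theorem lower_sandwich (n : ℕ) (hn : 1 ≤ n) (p : Finset (Fin (n+1)) → ℝ)
    (hp : ∀ σ ∈ bdry n, 0 ≤ p σ ∧ p σ ≤ 1)
    (A B : Finset (Finset (Fin (n+1))))
    (hA : IsComplex A) (hB : IsComplex B) (hAB : A ⊆ B) (hBb : B ⊆ bdry n) :
    ∑ Y ∈ (bdry n).powerset.filter (fun Y => IsComplex Y ∧ A ⊆ Y ∧ Y ⊆ B),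
        lowerP (bdry n) p Y
    = (∏ τ ∈ A, p τ) *
      ∑ S ∈ (extSimp (bdry n) B).powerset,
        (-1 : ℝ) ^ S.card *
          ∏ τ ∈ (bdry n).filter (fun τ => τ ∉ A ∧ ∃ σ ∈ S, τ ⊆ σ), p τ := by
  have hAbd : A ⊆ bdry n := hAB.trans hBb
  have hL : ∑ Y ∈ (bdry n).powerset.filter (fun Y => IsComplex Y ∧ A ⊆ Y ∧ Y ⊆ B),
        lowerP (bdry n) p Y = ∑ X ∈ (bdry n).powerset,
          if A ⊆ clLow X ∧ clLow X ⊆ B then bern (bdry n) p X else 0 := by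
    unfold lowerP
    simp_rw [Finset.sum_filter (s := (bdry n).powerset) (p := fun X => clLow X = _)]
    rw [Finset.sum_comm]
    refine Finset.sum_congr rfl fun X hX => ?_
    rw [Finset.sum_ite_eq]
    have h1 : clLow X ⊆ bdry n := (clLow_subset X).trans (Finset.mem_powerset.1 hX)
    simp [h1, isComplex_clLow X]
  rw [hL]
  have hkey : ∀ X ∈ (bdry n).powerset,
      (if A ⊆ clLow X ∧ clLow X ⊆ B then bern (bdry n) p X else 0) =
      ∑ S ∈ (extSimp (bdry n) B).powerset, (-1 : ℝ) ^ S.card *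
        (if A ∪ (bdry n).filter (fun τ => τ ∉ A ∧ ∃ σ ∈ S, τ ⊆ σ) ⊆ X
          then bern (bdry n) p X else 0) := by
    intro X hX
    have hXb := Finset.mem_powerset.1 hX
    have hAX : A ⊆ clLow X ↔ A ⊆ X := by
      refine ⟨fun h => h.trans (clLow_subset X), fun h τ hτ => ?_⟩
      rw [mem_clLow]
      exact ⟨((mem_bdry_iff τ).1 (hAbd hτ)).1, fun σ h1 h2 => h (hA τ hτ σ h1 h2)⟩
    have hS : ∀ S ∈ (extSimp (bdry n) B).powerset,
        (A ∪ (bdry n).filter (fun τ => τ ∉ A ∧ ∃ σ ∈ S, τ ⊆ σ) ⊆ X) ↔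
          A ⊆ X ∧ ∀ σ ∈ S, σ ∈ clLow X := by
      intro S hS
      rw [Finset.union_subset_iff]
      refine and_congr_right fun hAX' => ⟨fun h σ hσ => ?_, fun h τ hτ => ?_⟩
      · have hσb := (Finset.mem_filter.1 (Finset.mem_powerset.1 hS hσ)).1
        rw [mem_bdry_iff] at hσb
        rw [mem_clLow]
        refine ⟨hσb.1, fun τ h1 h2 => ?_⟩
        by_cases hτ : τ ∈ A
        · exact hAX' hτ
        · refine h (Finset.mem_filter.2 ⟨(mem_bdry_iff τ).2 ⟨h2, ?_⟩, hτ, σ, hσ, h1⟩)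
          rintro rfl
          exact hσb.2 (Finset.univ_subset_iff.1 h1)
      · obtain ⟨hb, -, σ, hσ, h1⟩ := Finset.mem_filter.1 hτ
        exact ((mem_clLow X σ).1 (h σ hσ)).2 τ h1 ((mem_bdry_iff τ).1 hb).1
    rw [Finset.sum_congr rfl fun S h => by rw [if_congr (hS S h) rfl rfl]]
    rw [if_congr (and_congr hAX (clLow_subset_iff (bdry n) X B hXb)) rfl rfl]
    by_cases hAX' : A ⊆ X
    · simp only [hAX', true_and]
      have h := Finset.prod_add (fun σ => if σ ∈ clLow X then (-1 : ℝ) else 0) (fun _ => 1)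
        (extSimp (bdry n) B)
      have e1 : ∏ σ ∈ extSimp (bdry n) B, ((if σ ∈ clLow X then (-1 : ℝ) else 0) + 1) =
          if ∀ σ ∈ extSimp (bdry n) B, σ ∉ clLow X then 1 else 0 := by
        split_ifs with hh
        · exact Finset.prod_eq_one fun σ hσ => by simp [hh σ hσ]
        · push Not at hh
          obtain ⟨σ, h1, h2⟩ := hh
          exact Finset.prod_eq_zero h1 (by simp [h2])
      rw [e1] at h
      calc _ = (if ∀ σ ∈ extSimp (bdry n) B, σ ∉ clLow X then (1 : ℝ) else 0)
            * bern (bdry n) p X := by split_ifs <;> simp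
        _ = _ := by
          rw [h, Finset.sum_mul]
          refine Finset.sum_congr rfl fun S _ => ?_
          rw [Finset.prod_const_one, mul_one]
          split_ifs with hh
          · rw [Finset.prod_congr rfl fun σ hσ => if_pos (hh σ hσ), Finset.prod_const]
          · push Not at hh
            obtain ⟨σ, h1, h2⟩ := hh
            rw [Finset.prod_eq_zero h1 (by simp [h2])]
            simp
    · simp [hAX']
  rw [Finset.sum_congr rfl hkey, Finset.sum_comm, Finset.mul_sum]
  refine Finset.sum_congr rfl fun S _ => ?_
  rw [← Finset.mul_sum, bern_sum_superset _ _
    (Finset.union_subset hAbd (Finset.filter_subset _ _)), Finset.prod_union]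
  · ring
  · rw [Finset.disjoint_left]
    intro τ h1 h2
    exact (Finset.mem_filter.1 h2).2.1 h1
end

section
/- (Links in the upper model.) Fix a simplex σ ∈ Δ_n with ∏_{τ⊇σ} q_τ < 1 and let Δ' be the simplex on the vertex set [n] \ σ. Let λ̄ be the probability measure on simplicial subcomplexes L ⊆ Δ' defined by λ̄(L) = P̄_n({Y : σ ∈ Y and Lk_Y(σ) = L}) / P̄_n({Y : σ ∈ Y}). Then λ̄ = c_σ · P̄' + (1 − c_σ) · λ_∅, where c_σ = (1 − ∏_{τ⊇σ} q_τ)^{−1}, P̄' is the upper measure on subcomplexes of Δ' with probability parameters p'_τ = p_{σ∪τ}, and λ_∅ is the point mass at the empty complex. That is, λ̄(L) = c_σ · P̄'(L) for every nonempty complex L ⊆ Δ', and λ̄(∅) = c_σ · P̄'(∅) + (1 − c_σ). -/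
open Finset

/-- The simplex `Δ'` spanned by the vertices `[n] \ σ`. -/
def delta' {n : ℕ} (σ : Finset (Fin (n+1))) : Finset (Finset (Fin (n+1))) :=
  (simplexAll n).filter fun τ => τ ⊆ σᶜ

/-- The link of `σ` in `Y`: all simplices `τ` disjoint from `σ` with
`σ ∪ τ ∈ Y`. -/
def linkOf {n : ℕ} (σ : Finset (Fin (n+1))) (Y : Finset (Finset (Fin (n+1)))) :
    Finset (Finset (Fin (n+1))) :=
  (simplexAll n).filter fun τ => τ ⊆ σᶜ ∧ σ ∪ τ ∈ Y

/-- The conditional distribution of the link `Lk_Y(σ)` given `σ ∈ Y`, in the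
upper model on `Δₙ` with parameters `p`. -/
noncomputable def lamUp {n : ℕ} (p : Finset (Fin (n+1)) → ℝ)
    (σ : Finset (Fin (n+1))) (L : Finset (Finset (Fin (n+1)))) : ℝ :=
  (∑ Y ∈ (simplexAll n).powerset.filter
      (fun Y => IsComplex Y ∧ σ ∈ Y ∧ linkOf σ Y = L),
      upperP (simplexAll n) p Y) /
  (∑ Y ∈ (simplexAll n).powerset.filter (fun Y => IsComplex Y ∧ σ ∈ Y),
      upperP (simplexAll n) p Y)

lemma bern_sum_union {n : ℕ} (T U : Finset (Finset (Fin (n+1)))) (hd : Disjoint T U)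
    (p : Finset (Fin (n+1)) → ℝ) (f : Finset (Finset (Fin (n+1))) → ℝ) :
    ∑ X ∈ (T ∪ U).powerset, bern (T ∪ U) p X * f (X ∩ T)
      = ∑ A ∈ T.powerset, bern T p A * f A := by
  induction U using Finset.induction_on with
  | empty =>
    simp only [Finset.union_empty]
    refine Finset.sum_congr rfl fun X hX => ?_
    rw [Finset.inter_eq_left.2 (Finset.mem_powerset.1 hX)]
  | insert a U ha ih =>
    rw [Finset.disjoint_insert_right] at hd
    have haS : a ∉ T ∪ U := by simp [ha, hd.1]
    rw [Finset.union_insert, Finset.sum_powerset_insert haS, ← ih hd.2, ← Finset.sum_add_distrib]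
    refine Finset.sum_congr rfl fun X hX => ?_
    have hX' := Finset.mem_powerset.1 hX
    have haX : a ∉ X := fun h => haS (hX' h)
    have h1 : insert a X ∩ T = X ∩ T := Finset.insert_inter_of_notMem hd.1
    have h2 : insert a (T ∪ U) \ X = insert a ((T ∪ U) \ X) :=
      Finset.insert_sdiff_of_notMem _ haX
    have h3 : insert a (T ∪ U) \ insert a X = (T ∪ U) \ X := by
      ext x
      simp only [Finset.mem_sdiff, Finset.mem_insert]
      constructor
      · tauto
      · rintro ⟨h, h'⟩
        exact ⟨Or.inr h, fun h4 => h4.elim (fun h5 => haS (h5 ▸ h)) h'⟩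
    rw [h1]
    unfold bern
    rw [h2, h3, Finset.prod_insert haX, Finset.prod_insert (by simp [haS])]
    ring

lemma bern_marginal {n : ℕ} (S T : Finset (Finset (Fin (n+1)))) (hT : T ⊆ S)
    (p : Finset (Fin (n+1)) → ℝ) (f : Finset (Finset (Fin (n+1))) → ℝ) :
    ∑ X ∈ S.powerset, bern S p X * f (X ∩ T)
      = ∑ A ∈ T.powerset, bern T p A * f A := by
  have := bern_sum_union T (S \ T) Finset.disjoint_sdiff p f
  rwa [Finset.union_sdiff_of_subset hT] at this

lemma bern_image {n : ℕ} (D A : Finset (Finset (Fin (n+1)))) (hA : A ⊆ D)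
    (e : Finset (Fin (n+1)) → Finset (Fin (n+1))) (he : Set.InjOn e D)
    (p : Finset (Fin (n+1)) → ℝ) :
    bern (D.image e) p (A.image e) = bern D (fun τ => p (e τ)) A := by
  unfold bern
  have h : D.image e \ A.image e = (D \ A).image e := by
    ext x
    simp only [Finset.mem_sdiff, Finset.mem_image]
    constructor
    · rintro ⟨⟨y, hy, rfl⟩, h⟩
      exact ⟨y, ⟨hy, fun h' => h ⟨y, h', rfl⟩⟩, rfl⟩
    · rintro ⟨y, ⟨hy, hy'⟩, rfl⟩
      refine ⟨⟨y, hy, rfl⟩, ?_⟩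
      rintro ⟨z, hz, hzy⟩
      exact hy' (he (hA hz) hy hzy ▸ hz)
  rw [h, Finset.prod_image (fun x hx y hy => he (hA hx) (hA hy)),
    Finset.prod_image (fun x hx y hy => he (Finset.mem_sdiff.1 hx).1 (Finset.mem_sdiff.1 hy).1)]

lemma sum_image_powerset {n : ℕ} (D : Finset (Finset (Fin (n+1))))
    (e : Finset (Fin (n+1)) → Finset (Fin (n+1))) (he : Set.InjOn e D)
    (g : Finset (Finset (Fin (n+1))) → ℝ) :
    ∑ A ∈ (D.image e).powerset, g A = ∑ B ∈ D.powerset, g (B.image e) := by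
  rw [Finset.powerset_image, Finset.sum_image]
  intro A hA B hB h
  have hA := Finset.mem_powerset.1 hA
  have hB := Finset.mem_powerset.1 hB
  have key : ∀ A B : Finset (Finset (Fin (n+1))), A ⊆ D → B ⊆ D →
      A.image e = B.image e → A ⊆ B := by
    intro A B hA hB h x hx
    have : e x ∈ B.image e := h ▸ Finset.mem_image_of_mem e hx
    obtain ⟨y, hy, hyx⟩ := Finset.mem_image.1 this
    exact he (hB hy) (hA hx) hyx ▸ hy
  exact Finset.Subset.antisymm (key A B hA hB h) (key B A hB hA h.symm)

lemma sum_upperP {n : ℕ} (p : Finset (Fin (n+1)) → ℝ)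
    (R : Finset (Finset (Fin (n+1))) → Prop) [DecidablePred R] :
    ∑ Y ∈ (simplexAll n).powerset.filter R, upperP (simplexAll n) p Y
      = ∑ X ∈ (simplexAll n).powerset, bern (simplexAll n) p X * (if R (clUp X) then 1 else 0) := by
  unfold upperP
  simp_rw [Finset.sum_filter (s := (simplexAll n).powerset) (p := fun X => clUp X = _)]
  rw [Finset.sum_comm]
  refine Finset.sum_congr rfl fun X _ => ?_
  rw [Finset.sum_ite_eq]
  have : clUp X ∈ (simplexAll n).powerset := by
    rw [Finset.mem_powerset]
    intro x hx
    simp only [clUp, simplexAll, Finset.mem_filter] at hx ⊢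
    exact ⟨hx.1, hx.2.1⟩
  simp [Finset.mem_filter, this]

lemma isComplex_clUp {n : ℕ} (X : Finset (Finset (Fin (n+1)))) : IsComplex (clUp X) := by
  intro s hs t ht hne
  simp only [clUp, Finset.mem_filter, Finset.mem_univ, true_and] at hs ⊢
  obtain ⟨_, r, hr, hsr⟩ := hs
  exact ⟨hne, r, hr, ht.trans hsr⟩

def starOf {n : ℕ} (σ : Finset (Fin (n+1))) : Finset (Finset (Fin (n+1))) :=
  (simplexAll n).filter (fun τ => σ ⊆ τ)

lemma mem_linkOf_clUp {n : ℕ} (σ : Finset (Fin (n+1))) (X : Finset (Finset (Fin (n+1))))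
    (τ : Finset (Fin (n+1))) :
    τ ∈ linkOf σ (clUp X) ↔ τ.Nonempty ∧ τ ⊆ σᶜ ∧ ∃ ρ ∈ X, σ ∪ τ ⊆ ρ := by
  simp only [linkOf, clUp, simplexAll, Finset.mem_filter, Finset.mem_univ, true_and]
  constructor
  · tauto
  · rintro ⟨h1, h2, h3⟩
    exact ⟨h1, h2, h1.mono Finset.subset_union_right, h3⟩

lemma image_delta {n : ℕ} (σ : Finset (Fin (n+1))) :
    (delta' σ).image (fun τ => σ ∪ τ) = (starOf σ).erase σ := by
  ext ρ
  simp only [delta', starOf, simplexAll, Finset.mem_image, Finset.mem_filter, Finset.mem_univ,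
    true_and, Finset.mem_erase]
  constructor
  · rintro ⟨τ, ⟨⟨x, hx⟩, h2⟩, rfl⟩
    refine ⟨fun h => ?_, ⟨x, Finset.mem_union_right _ hx⟩, Finset.subset_union_left⟩
    have h3 : x ∈ σ := h ▸ Finset.mem_union_right _ hx
    exact (Finset.mem_compl.1 (h2 hx)) h3
  · rintro ⟨h1, _, h3⟩
    refine ⟨ρ \ σ, ⟨?_, ?_⟩, Finset.union_sdiff_of_subset h3⟩
    · rw [Finset.sdiff_nonempty]
      exact fun h => h1 (Finset.Subset.antisymm h h3)
    · intro x hx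
      exact Finset.mem_compl.2 (Finset.mem_sdiff.1 hx).2

lemma injOn_union {n : ℕ} (σ : Finset (Fin (n+1))) :
    Set.InjOn (fun τ => σ ∪ τ) (delta' σ : Set (Finset (Fin (n+1)))) := by
  have key : ∀ A ∈ delta' σ, (σ ∪ A) \ σ = A := by
    intro A hA
    have hA := (Finset.mem_filter.1 hA).2
    ext x
    have := @hA x
    simp only [Finset.mem_sdiff, Finset.mem_union, Finset.mem_compl] at *
    tauto
  intro A hA B hB h
  rw [← key A hA, ← key B hB]
  exact congrArg (· \ σ) h

lemma link_image {n : ℕ} (σ : Finset (Fin (n+1))) (B : Finset (Finset (Fin (n+1))))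
    (hB : B ⊆ delta' σ) : linkOf σ (clUp (B.image (fun τ => σ ∪ τ))) = clUp B := by
  ext τ
  rw [mem_linkOf_clUp]
  simp only [clUp, Finset.mem_filter, Finset.mem_univ, true_and]
  constructor
  · rintro ⟨h1, h2, ρ, hρ, h3⟩
    obtain ⟨β, hβ, rfl⟩ := Finset.mem_image.1 hρ
    refine ⟨h1, β, hβ, fun x hx => ?_⟩
    rcases Finset.mem_union.1 (h3 (Finset.mem_union_right _ hx)) with h | h
    · exact absurd h (Finset.mem_compl.1 (h2 hx))
    · exact h
  · rintro ⟨h1, β, hβ, h2⟩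
    exact ⟨h1, h2.trans (Finset.mem_filter.1 (hB hβ)).2, _, Finset.mem_image_of_mem _ hβ,
      Finset.union_subset_union_right h2⟩

lemma link_inter {n : ℕ} (σ : Finset (Fin (n+1))) (X : Finset (Finset (Fin (n+1)))) :
    linkOf σ (clUp (X ∩ (starOf σ).erase σ)) = linkOf σ (clUp X) := by
  ext τ
  rw [mem_linkOf_clUp, mem_linkOf_clUp]
  refine and_congr_right fun h1 => and_congr_right fun h2 => ?_
  constructor
  · rintro ⟨ρ, hρ, h⟩
    exact ⟨ρ, (Finset.mem_inter.1 hρ).1, h⟩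
  · rintro ⟨ρ, hρ, h⟩
    obtain ⟨x, hx⟩ := h1
    have hxρ := h (Finset.mem_union_right _ hx)
    refine ⟨ρ, Finset.mem_inter.2 ⟨hρ, Finset.mem_erase.2 ⟨?_, ?_⟩⟩, h⟩
    · rintro rfl
      exact Finset.mem_compl.1 (h2 hx) hxρ
    · simp only [starOf, simplexAll, Finset.mem_filter, Finset.mem_univ, true_and]
      exact ⟨⟨x, hxρ⟩, Finset.subset_union_left.trans h⟩

lemma upperP_delta {n : ℕ} (p : Finset (Fin (n+1)) → ℝ) (σ : Finset (Fin (n+1)))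
    (L : Finset (Finset (Fin (n+1)))) :
    upperP (delta' σ) (fun τ => p (σ ∪ τ)) L
      = ∑ X ∈ (simplexAll n).powerset, bern (simplexAll n) p X *
          (if linkOf σ (clUp X) = L then 1 else 0) := by
  have h := bern_marginal (simplexAll n) ((starOf σ).erase σ)
    ((Finset.erase_subset _ _).trans (Finset.filter_subset _ _)) p
    (fun A => if linkOf σ (clUp A) = L then 1 else 0)
  simp only [link_inter] at h
  rw [h, ← image_delta, sum_image_powerset _ _ (injOn_union σ), upperP, Finset.sum_filter]
  refine Finset.sum_congr rfl fun B hB => ?_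
  have hB := Finset.mem_powerset.1 hB
  rw [link_image σ B hB, bern_image _ _ hB _ (injOn_union σ)]
  simp

lemma sum_bern_one {n : ℕ} (S : Finset (Finset (Fin (n+1)))) (p : Finset (Fin (n+1)) → ℝ) :
    ∑ X ∈ S.powerset, bern S p X = 1 := by
  have h := bern_marginal S ∅ (Finset.empty_subset _) p (fun _ => 1)
  simpa [bern] using h

lemma mem_clUp_iff {n : ℕ} (σ : Finset (Fin (n+1))) (hσ : σ.Nonempty)
    (X : Finset (Finset (Fin (n+1)))) :
    X ∩ starOf σ = ∅ ↔ σ ∉ clUp X := by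
  rw [← not_iff_not, not_not, ← Ne, ← Finset.nonempty_iff_ne_empty]
  simp only [clUp, Finset.mem_filter, Finset.mem_univ, true_and]
  constructor
  · rintro ⟨ρ, hρ⟩
    simp only [starOf, Finset.mem_inter, Finset.mem_filter] at hρ
    exact ⟨hσ, ρ, hρ.1, hρ.2.2⟩
  · rintro ⟨_, ρ, hρ, h⟩
    refine ⟨ρ, ?_⟩
    simp only [starOf, simplexAll, Finset.mem_inter, Finset.mem_filter, Finset.mem_univ, true_and]
    exact ⟨hρ, hσ.mono h, h⟩

lemma sum_not_mem {n : ℕ} (p : Finset (Fin (n+1)) → ℝ) (σ : Finset (Fin (n+1)))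
    (hσ : σ.Nonempty) :
    ∑ X ∈ (simplexAll n).powerset, bern (simplexAll n) p X *
        (if σ ∉ clUp X then 1 else 0) = ∏ τ ∈ starOf σ, (1 - p τ) := by
  have h := bern_marginal (simplexAll n) (starOf σ) (Finset.filter_subset _ _) p
    (fun A => if A = ∅ then 1 else 0)
  simp only [mem_clUp_iff σ hσ] at h
  rw [h]
  simp [bern]

lemma link_of_not_mem {n : ℕ} (σ : Finset (Fin (n+1))) (hσ : σ.Nonempty)
    (X : Finset (Finset (Fin (n+1)))) (h : σ ∉ clUp X) : linkOf σ (clUp X) = ∅ := by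
  rw [Finset.eq_empty_iff_forall_notMem]
  intro τ hτ
  obtain ⟨_, _, ρ, hρ, h1⟩ := (mem_linkOf_clUp σ X τ).1 hτ
  apply h
  simp only [clUp, Finset.mem_filter, Finset.mem_univ, true_and]
  exact ⟨hσ, ρ, hρ, Finset.subset_union_left.trans h1⟩

lemma lamUp_eq {n : ℕ} (p : Finset (Fin (n+1)) → ℝ) (σ : Finset (Fin (n+1)))
    (hσ : σ.Nonempty) (L : Finset (Finset (Fin (n+1)))) :
    lamUp p σ L = (upperP (delta' σ) (fun τ => p (σ ∪ τ)) L
      - (if L = ∅ then 1 else 0) * ∏ τ ∈ starOf σ, (1 - p τ))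
        / (1 - ∏ τ ∈ starOf σ, (1 - p τ)) := by
  unfold lamUp
  rw [sum_upperP, sum_upperP, upperP_delta, ← sum_not_mem p σ hσ]
  congr 1
  · rw [Finset.mul_sum, ← Finset.sum_sub_distrib]
    refine Finset.sum_congr rfl fun X _ => ?_
    by_cases h : σ ∈ clUp X
    · simp [h, isComplex_clUp]
    · simp [h, link_of_not_mem σ hσ X h, eq_comm]
  · rw [← sum_bern_one (simplexAll n) p, ← Finset.sum_sub_distrib]
    refine Finset.sum_congr rfl fun X _ => ?_
    by_cases h : σ ∈ clUp X
    · simp [h, isComplex_clUp, sum_bern_one]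
    · simp [h, sum_bern_one]

/-- Links in the upper model: the conditional distribution of `Lk_Y(σ)` given
`σ ∈ Y` equals `c_σ · P̄' + (1 - c_σ) · λ_∅`, where `P̄'` is the upper measure
on subcomplexes of `Δ'` with parameters `p'_τ = p_{σ∪τ}` and
`c_σ = (1 - ∏_{τ⊇σ} q_τ)⁻¹`. -/
theorem link_upper (n : ℕ) (hn : 1 ≤ n) (p : Finset (Fin (n+1)) → ℝ)
    (hp : ∀ τ ∈ simplexAll n, 0 ≤ p τ ∧ p τ ≤ 1)
    (σ : Finset (Fin (n+1))) (hσ : σ ∈ simplexAll n)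
    (hq : ∏ τ ∈ (simplexAll n).filter (fun τ => σ ⊆ τ), (1 - p τ) < 1) :
    (∀ L ∈ (delta' σ).powerset.filter (fun L => IsComplex L), L ≠ ∅ →
      lamUp p σ L
        = (1 - ∏ τ ∈ (simplexAll n).filter (fun τ => σ ⊆ τ), (1 - p τ))⁻¹ *
            upperP (delta' σ) (fun τ => p (σ ∪ τ)) L) ∧
    lamUp p σ (∅ : Finset (Finset (Fin (n+1))))
      = (1 - ∏ τ ∈ (simplexAll n).filter (fun τ => σ ⊆ τ), (1 - p τ))⁻¹ *
          upperP (delta' σ) (fun τ => p (σ ∪ τ)) ∅ +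
        (1 - (1 - ∏ τ ∈ (simplexAll n).filter (fun τ => σ ⊆ τ), (1 - p τ))⁻¹) := by
  have hne : σ.Nonempty := (Finset.mem_filter.1 hσ).2
  have hpos : 1 - ∏ τ ∈ (simplexAll n).filter (fun τ => σ ⊆ τ), (1 - p τ) ≠ 0 := 
    (sub_pos.2 hq).ne'
  constructor
  · intro L _ hL
    rw [lamUp_eq p σ hne L, if_neg hL, starOf, zero_mul, sub_zero, div_eq_inv_mul]
  · rw [lamUp_eq p σ hne ∅, if_pos rfl, starOf]
    field_simp
    ring
end
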